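/- arXiv:2105.13873 — 2 statements merged into one kernel-verified Lean document; each statement's English description precedes it below -/
import Mathlib

section
/- For any pair of linearly independent vectors Y1, Y2 ∈ V1 there exists a bijection Ψ: ℝ^5 → ℝ^5 such that Ψ(x·y) = Ψ(x)·Ψ(y) for all x,y ∈ ℝ^5, Ψ(δ_λ(x)) = δ_λ(Ψ(x)) for all x ∈ ℝ^5 and λ > 0, and Ψ(exp(X1)) = exp(Y1), Ψ(exp(X2)) = exp(Y2). -/
open MeasureTheory Set Filter
open scoped ENNReal NNReal Topology

noncomputable section

/-- The free Carnot group `𝔽_{2,3}` identified with `ℝ⁵` via exponential coordinates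
of the second type. -/
abbrev G : Type := Fin 5 → ℝ

/-- The group product of `𝔽_{2,3}` in exponential coordinates of the second type. -/
def gmul (x y : G) : G :=
  ![x 0 + y 0, x 1 + y 1, x 2 + y 2 - x 0 * y 1,
    x 3 + y 3 - x 0 * y 2 + x 0 ^ 2 * y 1 / 2,
    x 4 + y 4 + x 0 * x 1 * y 1 + x 0 * y 1 ^ 2 / 2 - x 1 * y 2]

/-- The group inverse of `𝔽_{2,3}`. -/
def ginv (x : G) : G :=
  ![-x 0, -x 1, -x 2 - x 0 * x 1,
    -x 3 - x 0 * x 2 - x 0 ^ 2 * x 1 / 2,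
    -x 4 - x 1 * x 2 - x 0 * x 1 ^ 2 / 2]

/-- The dilations `δ_l` (the formula is used also for `l < 0`). -/
def gdil (l : ℝ) (x : G) : G :=
  ![l * x 0, l * x 1, l ^ 2 * x 2, l ^ 3 * x 3, l ^ 3 * x 4]

/-- A horizontal vector `(v₁, v₂) ∈ V₁` as a point of `ℝ⁵`. -/
def hor (v : ℝ × ℝ) : G := ![v.1, v.2, 0, 0, 0]

/-- Exponential of a horizontal vector in exponential coordinates of the second type. -/
def gexp (v : ℝ × ℝ) : G :=
  ![v.1, v.2, -(v.1 * v.2) / 2, v.1 ^ 2 * v.2 / 6, v.1 * v.2 ^ 2 / 3]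

/-- The homogeneous norm with parameters `e2, e3`. -/
def gnorm (e2 e3 : ℝ) (x : G) : ℝ :=
  max (Real.sqrt (x 0 ^ 2 + x 1 ^ 2))
    (max (e2 * |x 2| ^ ((1 : ℝ) / 2))
      (e3 * Real.sqrt (x 3 ^ 2 + x 4 ^ 2) ^ ((1 : ℝ) / 3)))

/-- The left-invariant homogeneous distance induced by `gnorm`. -/
def gdist (e2 e3 : ℝ) (x y : G) : ℝ := gnorm e2 e3 (gmul (ginv x) y)

/-- The predicate saying that `gdist e2 e3` is a distance on `ℝ⁵`. -/
def IsDist (e2 e3 : ℝ) : Prop :=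
  (∀ x y : G, gdist e2 e3 x y = gdist e2 e3 y x) ∧
    (∀ x y : G, gdist e2 e3 x y = 0 ↔ x = y) ∧
      ∀ x y z : G, gdist e2 e3 x z ≤ gdist e2 e3 x y + gdist e2 e3 y z

/-- Diameter of a set with respect to `gdist`, valued in `ℝ≥0∞`. -/
def gdiam (e2 e3 : ℝ) (S : Set G) : ℝ≥0∞ :=
  ⨆ x ∈ S, ⨆ y ∈ S, ENNReal.ofReal (gdist e2 e3 x y)

/-- The 1-dimensional Hausdorff measure of the metric space `(ℝ⁵, gdist e2 e3)`. -/
def H1 (e2 e3 : ℝ) (A : Set G) : ℝ≥0∞ :=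
  ⨆ (δ : ℝ) (_ : 0 < δ),
    ⨅ (E : ℕ → Set G) (_ : A ⊆ ⋃ n, E n)
      (_ : ∀ n, gdiam e2 e3 (E n) ≤ ENNReal.ofReal δ),
        ∑' n, 2⁻¹ * gdiam e2 e3 (E n)

/-- `γ` is `L`-Lipschitz w.r.t. `gdist` on a set `B ⊆ ℝ`. -/
def LipOn (e2 e3 L : ℝ) (γ : ℝ → G) (B : Set ℝ) : Prop :=
  ∀ s ∈ B, ∀ t ∈ B, gdist e2 e3 (γ s) (γ t) ≤ L * |s - t|

/-- The Pansu derivative of `γ : B → ℝ⁵` at `t` is `v`, i.e.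
`v = lim_{s → 0, t+s ∈ B} δ_{1/s}(γ(t)⁻¹ ⬝ γ(t+s))`. -/
def HasPansuDeriv (B : Set ℝ) (γ : ℝ → G) (t : ℝ) (v : G) : Prop :=
  Tendsto (fun s : ℝ => gdil s⁻¹ (gmul (ginv (γ t)) (γ (t + s))))
    (𝓝[{s : ℝ | s ≠ 0 ∧ t + s ∈ B}] 0) (𝓝 v)

/-- Membership in the one-sided open Euclidean cone `C(e, σ) ⊆ V₁`:
`⟨v, e⟩ > (1 - σ²)|v|`. -/
def inCone (e : ℝ × ℝ) (σ : ℝ) (v : ℝ × ℝ) : Prop :=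
  (1 - σ ^ 2) * Real.sqrt (v.1 ^ 2 + v.2 ^ 2) < e.1 * v.1 + e.2 * v.2

/-- `η` is a full `C(e, σ)`-curve on the compact interval `[a, b]`: it is Lipschitz
w.r.t. `gdist` and its Pansu derivative exists, is horizontal, and lies in `C(e, σ)`
at a.e. point. -/
def IsFullCCurve (e2 e3 : ℝ) (e : ℝ × ℝ) (σ a b : ℝ) (η : ℝ → G) : Prop :=
  a ≤ b ∧ (∃ L : ℝ, LipOn e2 e3 L η (Icc a b)) ∧
    ∀ᵐ t ∂(volume.restrict (Icc a b)), ∃ v : ℝ × ℝ,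
      HasPansuDeriv (Icc a b) η t (hor v) ∧ inCone e σ v

/-- The horizontal one-parameter subgroup `𝔑(e) = {exp (t e) : t ∈ ℝ}`. -/
def Nsub (e : ℝ × ℝ) : Set G := {x | ∃ t : ℝ, x = gexp (t * e.1, t * e.2)}

/-- The complementary normal homogeneous subgroup `𝕍(e) = {x : e₁x₁ + e₂x₂ = 0}`. -/
def Vsub (e : ℝ × ℝ) : Set G := {x | e.1 * x 0 + e.2 * x 1 = 0}

/-- Distance from a point to a set, `dist(x, S) = inf_{y ∈ S} d(x, y)`. -/
def distSet (e2 e3 : ℝ) (x : G) (S : Set G) : ℝ := sInf (gdist e2 e3 x '' S)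

/-- Left coset `p ⬝ S`. -/
def coset (p : G) (S : Set G) : Set G := gmul p '' S

/-- The intrinsic graph of `φ` over `B`, `{a ⬝ φ(a) : a ∈ B}`. -/
def graphOf (B : Set G) (φ : G → G) : Set G := (fun a => gmul a (φ a)) '' B

/-- `φ : B → 𝕍(e)` is intrinsic Lipschitz with constant `σ`:
`dist(q, p ⬝ 𝔑(e)) ≤ σ ‖p⁻¹ ⬝ q‖` for all `p, q` in the graph of `φ`. -/
def IntrinsicLipWith (e2 e3 : ℝ) (e : ℝ × ℝ) (σ : ℝ) (B : Set G) (φ : G → G) : Prop :=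
  ∀ p ∈ graphOf B φ, ∀ q ∈ graphOf B φ,
    distSet e2 e3 q (coset p (Nsub e)) ≤ σ * gnorm e2 e3 (gmul (ginv p) q)

/-- `φ : B → 𝕍(e)` is intrinsic Lipschitz (for some constant `σ ∈ [0, 1)`). -/
def IntrinsicLip (e2 e3 : ℝ) (e : ℝ × ℝ) (B : Set G) (φ : G → G) : Prop :=
  ∃ σ : ℝ, 0 ≤ σ ∧ σ < 1 ∧ IntrinsicLipWith e2 e3 e σ B φ

/-- The sub-semigroup `X(e, σ)` generated by exponentials of horizontal vectors in the
cone `C(e, σ)`. -/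
def Xset (e : ℝ × ℝ) (σ : ℝ) : Set G :=
  {x | ∃ (N : ℕ) (w : Fin N → ℝ × ℝ), (∀ i, inCone e σ (w i)) ∧
    x = (List.ofFn fun i => gexp (w i)).foldr gmul 0}

/-- The left-invariant horizontal vector field `X₁` in coordinates. -/
def X1v (_ : G) : G := ![1, 0, 0, 0, 0]

/-- The left-invariant horizontal vector field `X₂` in coordinates. -/
def X2v (x : G) : G := ![0, 1, -x 0, x 0 ^ 2 / 2, x 0 * x 1]

/-- A sub-unit horizontal curve on `[0, T]`. -/
def IsSubunit (T : ℝ) (γ : ℝ → G) : Prop :=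
  (∃ C : ℝ≥0, LipschitzOnWith C γ (Icc 0 T)) ∧
    ∃ h : ℝ → ℝ × ℝ, ∀ᵐ t ∂(volume.restrict (Icc 0 T)),
      HasDerivWithinAt γ ((h t).1 • X1v (γ t) + (h t).2 • X2v (γ t)) (Icc 0 T) t ∧
        (h t).1 ^ 2 + (h t).2 ^ 2 ≤ 1

/-- The Carnot–Carathéodory distance on `𝔽_{2,3}`. -/
def dc (x y : G) : ℝ :=
  sInf {T : ℝ | 0 ≤ T ∧ ∃ γ : ℝ → G, γ 0 = x ∧ γ T = y ∧ IsSubunit T γ}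

/-- Triangular maps of this shape are bijective. -/
theorem triang_bij (a b c d : ℝ) (hD : a * d - b * c ≠ 0) (p q r : ℝ → ℝ → ℝ) :
    Function.Bijective (fun x : G => (![a * x 0 + c * x 1, b * x 0 + d * x 1,
      (a * d - b * c) * x 2 + p (x 0) (x 1),
      (a * d - b * c) * (a * x 3 + c * x 4) + q (x 0) (x 1),
      (a * d - b * c) * (b * x 3 + d * x 4) + r (x 0) (x 1)] : G)) := by
  have lin : ∀ u v u' v' : ℝ, a * u + c * v = a * u' + c * v' →
      b * u + d * v = b * u' + d * v' → u = u' ∧ v = v' := by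
    intro u v u' v' h1 h2
    constructor
    · apply mul_left_cancel₀ hD
      linear_combination d * h1 - c * h2
    · apply mul_left_cancel₀ hD
      linear_combination a * h2 - b * h1
  have sol : ∀ y z : ℝ, ∃ u v : ℝ, a * u + c * v = y ∧ b * u + d * v = z := by
    intro y z
    refine ⟨(d * y - c * z) / (a * d - b * c), (a * z - b * y) / (a * d - b * c), ?_, ?_⟩
    · rw [mul_div_assoc', mul_div_assoc', ← add_div, div_eq_iff hD]
      ring
    · rw [mul_div_assoc', mul_div_assoc', ← add_div, div_eq_iff hD]
      ring
  constructor
  · intro x y h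
    have h0 := congrFun h 0
    have h1 := congrFun h 1
    have h2 := congrFun h 2
    have h3 := congrFun h 3
    have h4 := congrFun h 4
    simp only [Fin.isValue, Matrix.cons_val] at h0 h1 h2 h3 h4
    obtain ⟨e0, e1⟩ := lin _ _ _ _ h0 h1
    rw [e0, e1] at h2 h3 h4
    have e2 := mul_left_cancel₀ hD (add_right_cancel h2)
    obtain ⟨e3, e4⟩ := lin _ _ _ _ (mul_left_cancel₀ hD (add_right_cancel h3))
      (mul_left_cancel₀ hD (add_right_cancel h4))
    funext i
    fin_cases i
    exacts [e0, e1, e2, e3, e4]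
  · intro y
    obtain ⟨u, v, h0, h1⟩ := sol (y 0) (y 1)
    obtain ⟨s, t, h3, h4⟩ := sol ((y 3 - q u v) / (a * d - b * c))
      ((y 4 - r u v) / (a * d - b * c))
    refine ⟨![u, v, (y 2 - p u v) / (a * d - b * c), s, t], ?_⟩
    funext i
    fin_cases i
    · simpa using h0
    · simpa using h1
    · simp [mul_div_cancel₀ _ hD]
    · simp [h3, mul_div_cancel₀ _ hD]
    · simp [h4, mul_div_cancel₀ _ hD]

/-- The homogeneous automorphism sending `X₁, X₂` to `(a, b), (c, d)`. -/
def psi (a b c d : ℝ) (x : G) : G :=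
  gmul ![0, 0, (a * d - b * c) * x 2, (a * d - b * c) * (a * x 3 + c * x 4),
      (a * d - b * c) * (b * x 3 + d * x 4)]
    (gmul (gexp (x 1 * c, x 1 * d)) (gexp (x 0 * a, x 0 * b)))

/-- For any linearly independent `Y₁, Y₂ ∈ V₁` there is a homogeneous
group automorphism `Ψ` of `𝔽_{2,3}` with `Ψ(exp X₁) = exp Y₁` and `Ψ(exp X₂) = exp Y₂`. -/
theorem statement8 (Y1 Y2 : ℝ × ℝ) (hind : Y1.1 * Y2.2 - Y1.2 * Y2.1 ≠ 0) :
    ∃ Ψ : G → G, Function.Bijective Ψ ∧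
      (∀ x y : G, Ψ (gmul x y) = gmul (Ψ x) (Ψ y)) ∧
      (∀ l : ℝ, 0 < l → ∀ x : G, Ψ (gdil l x) = gdil l (Ψ x)) ∧
      Ψ (gexp (1, 0)) = gexp Y1 ∧ Ψ (gexp (0, 1)) = gexp Y2 := by
  obtain ⟨a, b⟩ := Y1
  obtain ⟨c, d⟩ := Y2
  simp only at hind
  refine ⟨psi a b c d, ?_, ?_, ?_, ?_, ?_⟩
  · have key := triang_bij a b c d hind
      (fun u v => gmul (gexp (v * c, v * d)) (gexp (u * a, u * b)) 2)
      (fun u v => gmul (gexp (v * c, v * d)) (gexp (u * a, u * b)) 3)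
      (fun u v => gmul (gexp (v * c, v * d)) (gexp (u * a, u * b)) 4)
    convert key using 1
    funext x i
    fin_cases i <;> simp [psi, gmul, gexp] <;> ring
  · intro x y
    funext i
    fin_cases i <;> simp [psi, gmul, gexp] <;> ring
  · intro l _ x
    funext i
    fin_cases i <;> simp [psi, gmul, gexp, gdil] <;> ring
  · funext i
    fin_cases i <;> simp [psi, gmul, gexp]
  · funext i
    fin_cases i <;> simp [psi, gmul, gexp]
end
end

section
/- Let B ⊆ ℝ be Borel, L > 0, and let γ: B → ℝ^5 satisfy d_c(γ(s),γ(t)) ≤ L|s−t| for all s,t ∈ B. Then for a.e. t ∈ B the derivative γ'(t) := lim_{r→0, t+r∈B} (γ(t+r)−γ(t))/r exists, and there exists a measurable h = (h1,h2): B → ℝ² with |h(t)| ≤ L for a.e. t ∈ B such that γ'(t) = h1(t)·X1(γ(t)) + h2(t)·X2(γ(t)) for a.e. t ∈ B. -/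
open MeasureTheory Set Filter
open scoped ENNReal NNReal Topology

noncomputable section

lemma isSubunit_iff (T : ℝ) (γ : ℝ → G) : IsSubunit T γ ↔
  (∃ C : ℝ≥0, LipschitzOnWith C γ (Icc 0 T)) ∧
    ∃ h : ℝ → ℝ × ℝ, ∀ᵐ t, t ∈ Icc 0 T →
      HasDerivWithinAt γ ((h t).1 • X1v (γ t) + (h t).2 • X2v (γ t)) (Icc 0 T) t ∧
        (h t).1 ^ 2 + (h t).2 ^ 2 ≤ 1 := by
  unfold IsSubunit
  simp_rw [ae_restrict_iff' measurableSet_Icc]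

lemma IsSubunit.mono {T t : ℝ} {γ : ℝ → G} (h : IsSubunit T γ) (ht : t ≤ T) :
    IsSubunit t γ := by
  rw [isSubunit_iff] at *
  obtain ⟨⟨C, hC⟩, h, hh⟩ := h
  have hs : Icc 0 t ⊆ Icc 0 T := Icc_subset_Icc le_rfl ht
  refine ⟨⟨C, hC.mono hs⟩, h, ?_⟩
  filter_upwards [hh] with s hs' hst
  exact ⟨(hs' (hs hst)).1.mono hs, (hs' (hs hst)).2⟩

lemma lin_bound {T K : ℝ} (hT : 0 ≤ T) {f f' : ℝ → ℝ} {C : ℝ≥0} (hf : LipschitzOnWith C f (Icc 0 T))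
    (hd : ∀ᵐ t, t ∈ Icc 0 T → HasDerivWithinAt f (f' t) (Icc 0 T) t ∧ |f' t| ≤ K) :
    |f T - f 0| ≤ K * T := by
  have hac : AbsolutelyContinuousOnInterval f 0 T := by
    apply LipschitzOnWith.absolutelyContinuousOnInterval (K := C)
    rwa [uIcc_of_le hT]
  rw [← hac.integral_deriv_eq_sub]
  have h1 : ∀ᵐ x : ℝ, x ≠ T := by simp [ae_iff, measure_singleton]
  have : ∀ᵐ x, x ∈ uIoc 0 T → ‖deriv f x‖ ≤ K := by
    filter_upwards [hd, h1] with x hx hxT hx0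
    rw [uIoc_of_le hT] at hx0
    obtain ⟨a, b⟩ := hx ⟨hx0.1.le, hx0.2⟩
    have := a.hasDerivAt (Icc_mem_nhds hx0.1 (lt_of_le_of_ne hx0.2 hxT))
    rw [this.deriv]; exact b
  have := intervalIntegral.norm_integral_le_of_norm_le_const_ae this
  simpa [abs_of_nonneg hT] using this

/-- linear functional estimate along a curve -/
lemma curve_bound {T K : ℝ} (hT : 0 ≤ T) {γ V : ℝ → G} {C : ℝ≥0} (hf : LipschitzOnWith C γ (Icc 0 T))
    (c : G)
    (hd : ∀ᵐ t, t ∈ Icc 0 T → HasDerivWithinAt γ (V t) (Icc 0 T) t ∧ |∑ i, c i * V t i| ≤ K) :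
    |∑ i, c i * (γ T i - γ 0 i)| ≤ K * T := by
  let ℓ : G →L[ℝ] ℝ := ∑ i, c i • ContinuousLinearMap.proj (R := ℝ) (φ := fun _ : Fin 5 => ℝ) i
  have hℓ : ∀ x, ℓ x = ∑ i, c i * x i := by intro x; simp [ℓ]
  have := lin_bound (T := T) (K := K) hT (f := fun t => ℓ (γ t)) (f' := fun t => ℓ (V t))
    (ℓ.lipschitz.comp_lipschitzOnWith hf) ?_
  · rw [← map_sub, hℓ] at this
    simpa using this
  · filter_upwards [hd] with t ht hh
    refine ⟨ℓ.hasFDerivAt.comp_hasDerivWithinAt t (ht hh).1, ?_⟩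
    rw [hℓ]; exact (ht hh).2

lemma sq_le_of_unit {u v a b : ℝ} (h : a ^ 2 + b ^ 2 ≤ 1) :
    |u * a + v * b| ≤ Real.sqrt (u ^ 2 + v ^ 2) := by
  apply Real.abs_le_sqrt
  nlinarith [sq_nonneg (u * b - v * a), sq_nonneg u, sq_nonneg v]

lemma hor_bound {T : ℝ} (hT : 0 ≤ T) {γ : ℝ → G} (h : IsSubunit T γ) :
    Real.sqrt ((γ T 0 - γ 0 0) ^ 2 + (γ T 1 - γ 0 1) ^ 2) ≤ T := by
  rw [isSubunit_iff] at h
  obtain ⟨⟨C, hC⟩, h, hh⟩ := h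
  set u := γ T 0 - γ 0 0 with hu
  set v := γ T 1 - γ 0 1 with hv
  have := curve_bound (K := Real.sqrt (u ^ 2 + v ^ 2)) hT hC ![u, v, 0, 0, 0]
    (V := fun t => (h t).1 • X1v (γ t) + (h t).2 • X2v (γ t)) (by
      filter_upwards [hh] with t ht h0
      refine ⟨(ht h0).1, ?_⟩
      simpa [Fin.sum_univ_five, X1v, X2v] using sq_le_of_unit (u := u) (v := v) (ht h0).2)
  simp only [Fin.sum_univ_five] at this
  simp only [Matrix.cons_val] at this
  rw [← hu, ← hv] at this
  have h2 : u ^ 2 + v ^ 2 ≤ Real.sqrt (u ^ 2 + v ^ 2) * T := by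
    refine le_trans (le_trans (le_of_eq ?_) (le_abs_self _)) this
    ring
  have h3 : Real.sqrt (u ^ 2 + v ^ 2) ^ 2 = u ^ 2 + v ^ 2 := Real.sq_sqrt (by positivity)
  have h4 := Real.sqrt_nonneg (u ^ 2 + v ^ 2)
  by_contra hc
  push Not at hc
  nlinarith

lemma abs_le_of_sqrt {u v T : ℝ} (h : Real.sqrt (u ^ 2 + v ^ 2) ≤ T) : |u| ≤ T ∧ |v| ≤ T := by
  constructor
  · exact (Real.abs_le_sqrt (by nlinarith [sq_nonneg v])).trans h
  · exact (Real.abs_le_sqrt (by nlinarith [sq_nonneg u])).trans h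

lemma vert_bound {T : ℝ} (hT : 0 ≤ T) {γ : ℝ → G} (h : IsSubunit T γ) :
    |γ T 2 - γ 0 2 + γ 0 0 * (γ T 1 - γ 0 1)| ≤ T * T ∧
    |γ T 3 - γ 0 3 - γ 0 0 ^ 2 / 2 * (γ T 1 - γ 0 1)| ≤ T * (|γ 0 0| + T) * T ∧
    |γ T 4 - γ 0 4 - γ 0 0 * γ 0 1 * (γ T 1 - γ 0 1)| ≤ T * (|γ 0 0| + |γ 0 1| + T) * T := by
  have hb : ∀ t ∈ Icc 0 T, |γ t 0 - γ 0 0| ≤ T ∧ |γ t 1 - γ 0 1| ≤ T := fun t ht =>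
    abs_le_of_sqrt ((hor_bound ht.1 (h.mono ht.2)).trans ht.2)
  rw [isSubunit_iff] at h
  obtain ⟨⟨C, hC⟩, h, hh⟩ := h
  have h1 : ∀ a b : ℝ, a ^ 2 + b ^ 2 ≤ 1 → |b| ≤ 1 := by
    intro a b hab
    rw [abs_le]; constructor <;> nlinarith [sq_nonneg a]
  have key : ∀ {a b K : ℝ}, |b| ≤ 1 → |a| ≤ K → |a * b| ≤ K := by
    intro a b K hb ha
    rw [abs_mul]
    nlinarith [abs_nonneg a, abs_nonneg b]
  refine ⟨?_, ?_, ?_⟩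
  · have := curve_bound (K := T) hT hC ![0, γ 0 0, 1, 0, 0]
      (V := fun t => (h t).1 • X1v (γ t) + (h t).2 • X2v (γ t)) (by
      filter_upwards [hh] with t ht h0
      refine ⟨(ht h0).1, ?_⟩
      have h2 := h1 _ _ (ht h0).2
      obtain ⟨h3, h4⟩ := hb t h0
      rw [abs_sub_comm] at h3
      have := key h2 h3
      convert! this using 2
      simp [Fin.sum_univ_five, X1v, X2v]; ring)
    convert! this using 2
    simp [Fin.sum_univ_five]; ring
  · have := curve_bound (K := T * (|γ 0 0| + T)) hT hC ![0, -γ 0 0 ^ 2 / 2, 0, 1, 0]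
      (V := fun t => (h t).1 • X1v (γ t) + (h t).2 • X2v (γ t)) (by
      filter_upwards [hh] with t ht h0
      refine ⟨(ht h0).1, ?_⟩
      have h2 := h1 _ _ (ht h0).2
      obtain ⟨h3, h4⟩ := hb t h0
      have h5 : |(γ t 0 - γ 0 0) * (γ 0 0 + (γ t 0 - γ 0 0) / 2)| ≤ T * (|γ 0 0| + T) := by
        rw [abs_mul]
        gcongr
        refine (abs_add_le _ _).trans ?_
        rw [abs_div]
        norm_num
        linarith
      have := key h2 h5
      convert! this using 2
      simp [Fin.sum_univ_five, X1v, X2v]; ring)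
    convert! this using 2
    simp [Fin.sum_univ_five]; ring
  · have := curve_bound (K := T * (|γ 0 0| + |γ 0 1| + T)) hT hC ![0, -(γ 0 0 * γ 0 1), 0, 0, 1]
      (V := fun t => (h t).1 • X1v (γ t) + (h t).2 • X2v (γ t)) (by
      filter_upwards [hh] with t ht h0
      refine ⟨(ht h0).1, ?_⟩
      have h2 := h1 _ _ (ht h0).2
      obtain ⟨h3, h4⟩ := hb t h0
      have h5 : |(γ t 0 - γ 0 0) * γ 0 1 + γ 0 0 * (γ t 1 - γ 0 1)
          + (γ t 0 - γ 0 0) * (γ t 1 - γ 0 1)| ≤ T * (|γ 0 0| + |γ 0 1| + T) := by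
        refine (abs_add_le _ _).trans ?_
        have := (abs_add_le ((γ t 0 - γ 0 0) * γ 0 1) (γ 0 0 * (γ t 1 - γ 0 1)))
        rw [abs_mul, abs_mul] at this
        rw [abs_mul (γ t 0 - γ 0 0)]
        have e1 : |γ t 0 - γ 0 0| * |γ 0 1| ≤ T * |γ 0 1| := by gcongr
        have e2 : |γ 0 0| * |γ t 1 - γ 0 1| ≤ |γ 0 0| * T := by gcongr
        have e3 : |γ t 0 - γ 0 0| * |γ t 1 - γ 0 1| ≤ T * T := by gcongr
        linarith
      have := key h2 h5
      convert! this using 2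
      simp [Fin.sum_univ_five, X1v, X2v]; ring)
    convert! this using 2
    simp [Fin.sum_univ_five]; ring

/-- Reachability by sub-unit curves. -/
def Reach (x y : G) : Prop :=
  ∃ T : ℝ, 0 ≤ T ∧ ∃ γ : ℝ → G, γ 0 = x ∧ γ T = y ∧ IsSubunit T γ

lemma Reach.trans {x y z : G} (hxy : Reach x y) (hyz : Reach y z) : Reach x z := by
  obtain ⟨S, hS, γ, h0, h1, hγ⟩ := hxy
  obtain ⟨T, hT, η, k0, k1, hη⟩ := hyz
  rw [isSubunit_iff] at hγ hη
  obtain ⟨⟨C, hC⟩, h, hh⟩ := hγ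
  obtain ⟨⟨D, hD⟩, k, hk⟩ := hη
  let δ : ℝ → G := fun t => if t ≤ S then γ t else η (t - S)
  have d1 : ∀ t, t ≤ S → δ t = γ t := fun t ht => if_pos ht
  have d2 : ∀ t, S ≤ t → δ t = η (t - S) := by
    intro t ht
    rcases ht.eq_or_lt with rfl | ht
    · rw [d1 _ le_rfl, h1, sub_self, k0]
    · exact if_neg (not_le.2 ht)
  refine ⟨S + T, by positivity, δ, ?_, ?_, ?_⟩
  · rw [d1 _ hS, h0]
  · rw [d2 _ (by linarith), add_sub_cancel_left, k1]
  rw [isSubunit_iff]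
  constructor
  · refine ⟨C + D, LipschitzOnWith.of_dist_le_mul ?_⟩
    have main : ∀ s ∈ Icc 0 (S + T), ∀ t ∈ Icc 0 (S + T), s ≤ t →
        dist (δ s) (δ t) ≤ (C + D : ℝ≥0) * dist s t := by
      intro s hs t ht hst
      have hC0 := C.2
      have hD0 := D.2
      have a1 : ∀ a ∈ Icc 0 S, ∀ b ∈ Icc 0 S, a ≤ b → dist (δ a) (δ b) ≤ C * (b - a) := by
        intro a ha b hb hab
        rw [d1 _ ha.2, d1 _ hb.2]
        have := hC.dist_le_mul a ha b hb
        rwa [dist_comm a b, Real.dist_eq, abs_of_nonneg (sub_nonneg.2 hab)] at this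
      have a2 : ∀ a ∈ Icc S (S + T), ∀ b ∈ Icc S (S + T), a ≤ b →
          dist (δ a) (δ b) ≤ D * (b - a) := by
        intro a ha b hb hab
        rw [d2 _ ha.1, d2 _ hb.1]
        have := hD.dist_le_mul (a - S) ⟨by linarith [ha.1], by linarith [ha.2]⟩
          (b - S) ⟨by linarith [hb.1], by linarith [hb.2]⟩
        rw [dist_comm (a - S), Real.dist_eq, abs_of_nonneg (by linarith)] at this
        linarith
      have e : dist s t = t - s := by
        rw [dist_comm, Real.dist_eq, abs_of_nonneg (by linarith)]
      rw [e]
      push_cast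
      have hC1 : 0 ≤ (C : ℝ) := C.2
      have hD1 : 0 ≤ (D : ℝ) := D.2
      have hts : 0 ≤ t - s := by linarith
      rcases le_total t S with h | h
      · have := a1 s ⟨hs.1, hst.trans h⟩ t ⟨ht.1, h⟩ hst
        nlinarith
      rcases le_total s S with h' | h'
      · have b1 := a1 s ⟨hs.1, h'⟩ S ⟨hS, le_rfl⟩ h'
        have b2 := a2 S ⟨le_rfl, by linarith⟩ t ⟨h, ht.2⟩ h
        have := dist_triangle (δ s) (δ S) (δ t)
        nlinarith
      · have := a2 s ⟨h', hs.2⟩ t ⟨h, ht.2⟩ hst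
        nlinarith
    intro s hs t ht
    rcases le_total s t with h | h
    · exact main s hs t ht h
    · rw [dist_comm, dist_comm s]; exact main t ht s hs h
  · refine ⟨fun t => if t ≤ S then h t else k (t - S), ?_⟩
    have hk' : ∀ᵐ t : ℝ, t - S ∈ Icc 0 T →
      HasDerivWithinAt η ((k (t - S)).1 • X1v (η (t - S)) + (k (t - S)).2 • X2v (η (t - S)))
        (Icc 0 T) (t - S) ∧ (k (t - S)).1 ^ 2 + (k (t - S)).2 ^ 2 ≤ 1 :=
      (measurePreserving_sub_right volume S).quasiMeasurePreserving.ae hk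
    have hne : ∀ᵐ x : ℝ, x ≠ S := by simp [ae_iff, measure_singleton]
    filter_upwards [hh, hk', hne] with t ht1 ht2 hne ht
    rcases lt_or_gt_of_ne hne with hlt | hgt
    · obtain ⟨a, b⟩ := ht1 ⟨ht.1, hlt.le⟩
      rw [d1 _ hlt.le, if_pos hlt.le]
      refine ⟨?_, b⟩
      have a' : HasDerivWithinAt γ ((h t).1 • X1v (γ t) + (h t).2 • X2v (γ t))
          (Icc 0 (S + T)) t := by
        refine a.mono_of_mem_nhdsWithin ?_
        filter_upwards [self_mem_nhdsWithin, mem_nhdsWithin_of_mem_nhds (Iio_mem_nhds hlt)]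
          with r hr hr'
        exact ⟨hr.1, (mem_Iio.1 hr').le⟩
      refine a'.congr_of_eventuallyEq ?_ (d1 _ hlt.le)
      filter_upwards [mem_nhdsWithin_of_mem_nhds (Iio_mem_nhds hlt)] with r hr
      exact d1 _ (mem_Iio.1 hr).le
    · obtain ⟨a, b⟩ := ht2 ⟨by linarith, by linarith [ht.2]⟩
      rw [d2 _ hgt.le, if_neg (not_le.2 hgt)]
      refine ⟨?_, b⟩
      have a0 := HasDerivWithinAt.scomp (h := fun r => r - S) (h' := 1) (s := Icc S (S + T))
        (t' := Icc 0 T) t a ((hasDerivWithinAt_id t _).sub_const S)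
        (fun r hr => ⟨by linarith [hr.1], by linarith [hr.2]⟩)
      rw [one_smul] at a0
      have hmem : Icc S (S + T) ∈ 𝓝[Icc 0 (S + T)] t := by
        filter_upwards [self_mem_nhdsWithin, mem_nhdsWithin_of_mem_nhds (Ioi_mem_nhds hgt)]
          with r hr hr'
        exact ⟨(mem_Ioi.1 hr').le, hr.2⟩
      have a' := a0.mono_of_mem_nhdsWithin hmem
      refine a'.congr_of_eventuallyEq ?_ (d2 _ hgt.le)
      filter_upwards [mem_nhdsWithin_of_mem_nhds (Ioi_mem_nhds hgt)] with r hr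
      exact d2 _ (mem_Ioi.1 hr).le

/-- A smooth curve with constant unit control. -/
lemma reach_smooth {T : ℝ} (hT : 0 ≤ T) (γ : ℝ → G) (hγ : ContDiff ℝ 1 γ) (a b : ℝ)
    (hab : a ^ 2 + b ^ 2 ≤ 1)
    (hd : ∀ t, HasDerivAt γ (a • X1v (γ t) + b • X2v (γ t)) t) : Reach (γ 0) (γ T) := by
  refine ⟨T, hT, γ, rfl, rfl, ?_⟩
  rw [isSubunit_iff]
  refine ⟨hγ.contDiffOn.exists_lipschitzOnWith one_ne_zero (convex_Icc _ _) isCompact_Icc,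
    fun _ => (a, b), ?_⟩
  filter_upwards with t _
  exact ⟨(hd t).hasDerivWithinAt, hab⟩

lemma exists_sign (s : ℝ) : ∃ σ : ℝ, σ ^ 2 = 1 ∧ σ * |s| = s := by
  rcases le_total 0 s with h | h
  · exact ⟨1, by norm_num, by rw [abs_of_nonneg h]; ring⟩
  · exact ⟨-1, by norm_num, by rw [abs_of_nonpos h]; ring⟩

lemma reach_A (p q r u v s : ℝ) : Reach ![p, q, r, u, v] ![p + s, q, r, u, v] := by
  obtain ⟨σ, h1, h2⟩ := exists_sign s
  have := reach_smooth (abs_nonneg s) (fun t => ![p + σ * t, q, r, u, v]) (by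
    rw [contDiff_pi]; intro i; fin_cases i <;> simp <;> fun_prop) σ 0 (by rw [h1]; norm_num) (by
    intro t
    rw [hasDerivAt_pi]
    intro i
    fin_cases i <;> simp [X1v, X2v]
    · simpa using (((hasDerivAt_id t).const_mul σ).const_add p)
    all_goals exact hasDerivAt_const _ _)
  simpa [h2] using this

lemma reach_B (p q r u v s : ℝ) : Reach ![p, q, r, u, v]
    ![p, q + s, r - p * s, u + p ^ 2 * s / 2, v + p * (q * s + s ^ 2 / 2)] := by
  obtain ⟨σ, h1, h2⟩ := exists_sign s
  have := reach_smooth (abs_nonneg s) (fun t => ![p, q + σ * t, r - p * (σ * t),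
      u + p ^ 2 * (σ * t) / 2, v + p * (q * (σ * t) + (σ * t) ^ 2 / 2)]) (by
    rw [contDiff_pi]; intro i; fin_cases i <;> simp <;> fun_prop) 0 σ (by rw [h1]; norm_num) (by
    intro t
    have hb : HasDerivAt (fun t => σ * t) σ t := by
      simpa using (hasDerivAt_id t).const_mul σ
    rw [hasDerivAt_pi]
    intro i
    fin_cases i
    · have := hasDerivAt_const t p
      convert! this using 1
      simp [X1v, X2v]
    · have := hb.const_add q
      convert! this using 1
      simp [X1v, X2v]
    · have := (hb.const_mul p).const_sub r
      convert! this using 1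
      simp [X1v, X2v]; ring
    · have := ((hb.const_mul (p ^ 2)).div_const 2).const_add u
      convert! this using 1
      simp [X1v, X2v]; ring
    · have := (((hb.const_mul q).add ((hb.pow 2).div_const 2)).const_mul p).const_add v
      convert! this using 1
      simp [X1v, X2v]; ring)
  simp only [h2] at this
  simpa using this

lemma reach_M (p q r u v w s : ℝ) : Reach ![p, q, r, u, v]
    ![p, q + s, r - w * s, u + w ^ 2 * s / 2, v + w * (q * s + s ^ 2 / 2)] := by
  have h1 := reach_A p q r u v (w - p)
  have h2 := reach_B w q r u v s
  have h3 := reach_A w (q + s) (r - w * s) (u + w ^ 2 * s / 2) (v + w * (q * s + s ^ 2 / 2)) (p - w)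
  rw [add_sub_cancel] at h1 h3
  exact (h1.trans h2).trans h3

lemma reach_N (p q r u v w s : ℝ) : Reach ![p, q, r, u, v]
    ![p, q, r - w * s, u + w ^ 2 * s / 2, v + w * (q * s + s ^ 2 / 2)] := by
  have h1 := reach_M p q r u v w s
  have h2 := reach_M p (q + s) (r - w * s) (u + w ^ 2 * s / 2)
    (v + w * (q * s + s ^ 2 / 2)) 0 (-s)
  simp only [zero_mul, add_neg_cancel_right, sub_zero, add_zero, ne_eq, OfNat.ofNat_ne_zero,
    not_false_eq_true, zero_pow, zero_div] at h2
  exact h1.trans h2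

lemma Reach.cast {x y z : G} (h : Reach x y) (e : y = z) : Reach x z := e ▸ h

lemma reach_3 (p q r u v u' : ℝ) : Reach ![p, q, r, u, v] ![p, q, r, u', v] := by
  refine ((reach_N p q r u v 1 (u' - u)).trans (reach_N p q _ _ _ (-1) (u' - u))).cast ?_
  congr! 3 <;> [skip; congr! 1 <;> [skip; congr! 1]] <;> ring

lemma reach_4p (p q r u v s : ℝ) : Reach ![p, q, r, u, v] ![p, q, r, u, v + s ^ 2] := by
  refine ((reach_N p q r u v 1 s).trans (reach_N p q _ _ _ 1 (-s))).cast ?_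
  ext i; fin_cases i <;> simp <;> ring

lemma reach_4n (p q r u v s : ℝ) : Reach ![p, q, r, u, v] ![p, q, r, u, v - s ^ 2] := by
  refine ((reach_N p q r u v (-1) s).trans (reach_N p q _ _ _ (-1) (-s))).cast ?_
  ext i; fin_cases i <;> simp <;> ring

lemma reach_4 (p q r u v v' : ℝ) : Reach ![p, q, r, u, v] ![p, q, r, u, v'] := by
  rcases le_total v v' with h | h
  · have := reach_4p p q r u v (Real.sqrt (v' - v))
    rwa [Real.sq_sqrt (by linarith), add_sub_cancel] at this
  · have := reach_4n p q r u v (Real.sqrt (v - v'))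
    rwa [Real.sq_sqrt (by linarith), sub_sub_cancel] at this

lemma reach_2 (p q r u v r' : ℝ) : Reach ![p, q, r, u, v] ![p, q, r', u, v] := by
  have h1 := reach_N p q r u v 1 (r - r')
  rw [one_mul, sub_sub_cancel] at h1
  exact (h1.trans (reach_3 _ _ _ _ _ u)).trans (reach_4 _ _ _ _ _ v)

lemma reach_1 (p q r u v q' : ℝ) : Reach ![p, q, r, u, v] ![p, q', r, u, v] := by
  have h1 := reach_M p q r u v 0 (q' - q)
  simpa using h1

lemma reach_0 (p q r u v p' : ℝ) : Reach ![p, q, r, u, v] ![p', q, r, u, v] := by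
  have h1 := reach_A p q r u v (p' - p)
  rwa [add_sub_cancel] at h1

lemma reach_all (x y : G) : Reach x y := by
  have e : ∀ z : G, z = ![z 0, z 1, z 2, z 3, z 4] := by
    intro z; ext i; fin_cases i <;> rfl
  rw [e x, e y]
  exact ((((reach_0 _ _ _ _ _ _).trans (reach_1 _ _ _ _ _ _)).trans
    (reach_2 _ _ _ _ _ _)).trans (reach_3 _ _ _ _ _ _)).trans (reach_4 _ _ _ _ _ _)

lemma dc_bound (x y : G) {D : ℝ} (hD : dc x y ≤ D) :
    Real.sqrt ((y 0 - x 0) ^ 2 + (y 1 - x 1) ^ 2) ≤ D ∧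
    |y 2 - x 2 + x 0 * (y 1 - x 1)| ≤ D * D ∧
    |y 3 - x 3 - x 0 ^ 2 / 2 * (y 1 - x 1)| ≤ D * (|x 0| + D) * D ∧
    |y 4 - x 4 - x 0 * x 1 * (y 1 - x 1)| ≤ D * (|x 0| + |x 1| + D) * D := by
  have hD0 : 0 ≤ D := le_trans (Real.sInf_nonneg (fun T hT => hT.1)) hD
  have key : ∀ E > D, Real.sqrt ((y 0 - x 0) ^ 2 + (y 1 - x 1) ^ 2) ≤ E ∧
    |y 2 - x 2 + x 0 * (y 1 - x 1)| ≤ E * E ∧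
    |y 3 - x 3 - x 0 ^ 2 / 2 * (y 1 - x 1)| ≤ E * (|x 0| + E) * E ∧
    |y 4 - x 4 - x 0 * x 1 * (y 1 - x 1)| ≤ E * (|x 0| + |x 1| + E) * E := by
    intro E hE
    obtain ⟨T, ⟨hT, γ, h0, h1, h⟩, hTE⟩ := exists_lt_of_csInf_lt
      (show {T : ℝ | 0 ≤ T ∧ ∃ γ : ℝ → G, γ 0 = x ∧ γ T = y ∧ IsSubunit T γ}.Nonempty
        from reach_all x y) (lt_of_le_of_lt hD hE)
    have a := hor_bound hT h
    obtain ⟨b, c, d⟩ := vert_bound hT h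
    rw [h0, h1] at a b c d
    have hE0 : 0 ≤ E := hT.trans hTE.le
    refine ⟨a.trans hTE.le, b.trans ?_, c.trans ?_, d.trans ?_⟩ <;> gcongr
  have lim : ∀ (f : ℝ → ℝ) (c : ℝ), Continuous f → (∀ E > D, c ≤ f E) → c ≤ f D := by
    intro f c hf h
    refine ge_of_tendsto (x := 𝓝[>] D) (hf.continuousAt.tendsto.mono_left nhdsWithin_le_nhds) ?_
    filter_upwards [self_mem_nhdsWithin] with E hE using h E hE
  exact ⟨lim (fun E => E) _ (by fun_prop) fun E hE => (key E hE).1,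
    lim (fun E => E * E) _ (by fun_prop) fun E hE => (key E hE).2.1,
    lim (fun E => E * (|x 0| + E) * E) _ (by fun_prop) fun E hE => (key E hE).2.2.1,
    lim (fun E => E * (|x 0| + |x 1| + E) * E) _ (by fun_prop) fun E hE => (key E hE).2.2.2⟩

/-- If `f - c g` is quadratically small at `t` and `g' = m`, then `f' = c m`. -/
lemma deriv_of_quad {B : Set ℝ} {f g k : ℝ → ℝ} {t c m : ℝ} (hk : ContinuousAt k t)
    (hg : HasDerivWithinAt g m B t)
    (h : ∀ s ∈ B, |f s - f t - c * (g s - g t)| ≤ |s - t| * k s * |s - t|) (ht : t ∈ B) :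
    HasDerivWithinAt f (c * m) B t := by
  have h1 : HasDerivWithinAt (fun s => f s - f t - c * (g s - g t)) 0 B t := by
    rw [hasDerivWithinAt_iff_isLittleO]
    simp only [sub_self, mul_zero, sub_zero, smul_zero]
    have hz : Tendsto (fun s => |s - t| * k s) (𝓝[B] t) (𝓝 0) := by
      have : ContinuousAt (fun s => |s - t| * k s) t := by fun_prop
      have := this.tendsto
      simp only [sub_self, abs_zero, zero_mul] at this
      exact this.mono_left nhdsWithin_le_nhds
    rw [Asymptotics.isLittleO_iff]
    intro ε hε
    filter_upwards [self_mem_nhdsWithin, hz.eventually (gt_mem_nhds hε)] with s hs hs'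
    refine (h s hs).trans ?_
    rw [Real.norm_eq_abs]
    gcongr
  have h2 := (h1.add ((hg.sub_const (g t)).const_mul c)).add_const (f t)
  rw [zero_add] at h2
  refine h2.congr_of_eventuallyEq (Eventually.of_forall fun s => ?_) ?_ <;> simp

/-- If `γ : B → ℝ⁵` is `L`-Lipschitz w.r.t. the Carnot–Carathéodory
distance, then a.e. on `B` the derivative of `γ` along `B` exists and is a horizontal
combination `h₁ X₁(γ) + h₂ X₂(γ)` with measurable canonical coordinates `h` satisfying
`|h| ≤ L`. -/
theorem statement9 (B : Set ℝ) (hB : MeasurableSet B) (L : ℝ) (hL : 0 < L) (γ : ℝ → G)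
    (hγ : ∀ s ∈ B, ∀ t ∈ B, dc (γ s) (γ t) ≤ L * |s - t|) :
    ∃ h : ℝ → ℝ × ℝ, Measurable h ∧
      ∀ᵐ t ∂(volume.restrict B),
        Real.sqrt ((h t).1 ^ 2 + (h t).2 ^ 2) ≤ L ∧
        HasDerivWithinAt γ ((h t).1 • X1v (γ t) + (h t).2 • X2v (γ t)) B t := by
  have hb := fun s hs t ht => dc_bound (γ s) (γ t) (hγ s hs t ht)
  have lip : ∀ i : Fin 5, (i = 0 ∨ i = 1) →
      LipschitzOnWith (Real.toNNReal L) (fun t => γ t i) B := by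
    intro i hi
    refine LipschitzOnWith.of_dist_le_mul fun s hs t ht => ?_
    rw [Real.coe_toNNReal _ hL.le, dist_comm, Real.dist_eq, Real.dist_eq]
    have := abs_le_of_sqrt (hb s hs t ht).1
    rcases hi with rfl | rfl
    exacts [this.1, this.2]
  obtain ⟨f, hf, hfe⟩ := (lip 0 (Or.inl rfl)).extend_real
  obtain ⟨g, hg, hge⟩ := (lip 1 (Or.inr rfl)).extend_real
  refine ⟨fun t => (deriv f t, deriv g t), (measurable_deriv f).prodMk (measurable_deriv g), ?_⟩
  rw [ae_restrict_iff' hB]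
  have hiso : ∀ᵐ t : ℝ, t ∉ {x ∈ B | 𝓝[B ∩ Ioi x] x = ⊥} := by
    have : {x ∈ B | 𝓝[B ∩ Ioi x] x = ⊥}.Countable := countable_setOfPred_isolated_right_within
    exact this.ae_notMem volume
  filter_upwards [hf.ae_differentiableAt_real, hg.ae_differentiableAt_real, hiso] with t hft hgt hi ht
  have h0 : HasDerivWithinAt (fun t => γ t 0) (deriv f t) B t :=
    hft.hasDerivAt.hasDerivWithinAt.congr hfe (hfe ht)
  have h1 : HasDerivWithinAt (fun t => γ t 1) (deriv g t) B t :=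
    hgt.hasDerivAt.hasDerivWithinAt.congr hge (hge ht)
  constructor
  · have hne : (𝓝[B ∩ Ioi t] t).NeBot := ⟨fun hn => hi ⟨ht, hn⟩⟩
    have hnot : t ∉ B ∩ Ioi t := fun hh => lt_irrefl t hh.2
    have s0 := (hasDerivWithinAt_iff_tendsto_slope' hnot).1 (h0.mono inter_subset_left)
    have s1 := (hasDerivWithinAt_iff_tendsto_slope' hnot).1 (h1.mono inter_subset_left)
    have s2 := ((s0.pow 2).add (s1.pow 2)).sqrt
    refine le_of_tendsto s2 ?_
    filter_upwards [self_mem_nhdsWithin] with s hs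
    have hs0 : 0 < s - t := sub_pos.2 hs.2
    have := (hb t ht s hs.1).1
    rw [abs_sub_comm, abs_of_pos hs0] at this
    rw [Real.sqrt_le_left (by positivity)] at this
    rw [Real.sqrt_le_left hL.le, slope_def_field, slope_def_field, div_pow, div_pow, ← add_div,
      div_le_iff₀ (by positivity)]
    linarith
  · rw [hasDerivWithinAt_pi]
    intro i
    fin_cases i
    · simpa [X1v, X2v] using h0
    · simpa [X1v, X2v] using h1
    · have := deriv_of_quad (f := fun t => γ t 2) (k := fun _ => L * L) (c := -γ t 0)
        (by fun_prop) h1 (fun s hs => by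
          have := (hb t ht s hs).2.1
          rw [abs_sub_comm t s] at this
          simp only [neg_mul, sub_neg_eq_add]
          exact this.trans (le_of_eq (by ring))) ht
      simpa [X1v, X2v, mul_comm] using this
    · have := deriv_of_quad (f := fun t => γ t 3) (c := γ t 0 ^ 2 / 2)
        (k := fun s => L * L * (|γ t 0| + L * |s - t|))
        (by fun_prop) h1 (fun s hs => by
          have := (hb t ht s hs).2.2.1
          rw [abs_sub_comm t s] at this
          exact this.trans (le_of_eq (by ring))) ht
      simpa [X1v, X2v, mul_comm] using this
    · have := deriv_of_quad (f := fun t => γ t 4) (c := γ t 0 * γ t 1)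
        (k := fun s => L * L * (|γ t 0| + |γ t 1| + L * |s - t|))
        (by fun_prop) h1 (fun s hs => by
          have := (hb t ht s hs).2.2.2
          rw [abs_sub_comm t s] at this
          exact this.trans (le_of_eq (by ring))) ht
      simpa [X1v, X2v, mul_comm] using this
end
end
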